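/- arXiv:2509.05139 — 3 statements merged into one kernel-verified Lean document; each statement's English description precedes it below -/
import Mathlib

section
/- Let p = <P,F,O> and p' = <P',F',O'> be consistent ODRL Lite policies. If p is not contained in p' (some state of the world is valid for p but not valid for p'), then either P is not contained in P' as rule sets, or there exists an obligation rule τ' ∈ O' such that no obligation rule τ ∈ O satisfies τ ⊑ τ'. -/
/-- An event rule is identified with its matching predicate on events. -/
abbrev EventRule (Event : Type*) := Event → Prop

/-- Rule containment: every event matching `τ` matches `τ'`. -/
def RuleContained {Event : Type*} (τ τ' : EventRule Event) : Prop :=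
  ∀ e, τ e → τ' e

/-- Rule-set containment: every event matching some rule of `S` matches some rule of `S'`. -/
def RuleSetContained {Event : Type*} (S S' : Set (EventRule Event)) : Prop :=
  ∀ e, (∃ τ ∈ S, τ e) → (∃ τ' ∈ S', τ' e)

/-- Rule sets overlap: some event matches a rule of `S` and a rule of `S'`. -/
def RuleSetOverlap {Event : Type*} (S S' : Set (EventRule Event)) : Prop :=
  ∃ e, (∃ τ ∈ S, τ e) ∧ (∃ τ' ∈ S', τ' e)

/-- An ODRL Lite policy: permissions, prohibitions and obligations. -/
structure ODRLLitePolicy (Event : Type*) where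
  P : Set (EventRule Event)
  F : Set (EventRule Event)
  O : Set (EventRule Event)

/-- A state of the world `ω` violates a policy `p`. -/
def Violates {Event : Type*} (ω : Set Event) (p : ODRLLitePolicy Event) : Prop :=
  (∃ e ∈ ω, ∀ τ ∈ p.P, ¬ τ e) ∨
  (∃ e ∈ ω, ∃ τ ∈ p.F, τ e) ∨
  (∃ τ ∈ p.O, ∀ e ∈ ω, ¬ τ e)

/-- `ω` is valid for `p` if it does not violate it. -/
def Valid {Event : Type*} (ω : Set Event) (p : ODRLLitePolicy Event) : Prop :=
  ¬ Violates ω p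

/-- Policy containment: every state of the world valid for `p` is valid for `p'`. -/
def PolicyContained {Event : Type*} (p p' : ODRLLitePolicy Event) : Prop :=
  ∀ ω : Set Event, Valid ω p → Valid ω p'

/-- A policy is consistent if permissions and prohibitions do not overlap,
obligations and prohibitions do not overlap, and obligations are contained
in permissions. -/
def Consistent {Event : Type*} (p : ODRLLitePolicy Event) : Prop :=
  ¬ RuleSetOverlap p.P p.F ∧ ¬ RuleSetOverlap p.O p.F ∧ RuleSetContained p.O p.P

/-- For consistent policies, if `p` is not contained in `p'`,
then either the permissions of `p` are not contained in those of `p'`, or some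
obligation of `p'` contains no obligation of `p`. -/
theorem stmt1 {Event : Type*} (p p' : ODRLLitePolicy Event)
    (hp : Consistent p) (hp' : Consistent p')
    (h : ¬ PolicyContained p p') :
    ¬ RuleSetContained p.P p'.P ∨
      ∃ τ' ∈ p'.O, ∀ τ ∈ p.O, ¬ RuleContained τ τ' := by
  by_contra hc
  push Not at hc
  obtain ⟨hP, hO⟩ := hc
  apply h
  intro ω hv hv'
  have perm : ∀ e ∈ ω, ∃ τ ∈ p'.P, τ e := by
    intro e he
    apply hP e
    by_contra hn
    exact hv (Or.inl ⟨e, he, fun τ hτ ht => hn ⟨τ, hτ, ht⟩⟩)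
  rcases hv' with ⟨e, he, hn⟩ | ⟨e, he, hf⟩ | ⟨τ', hτ', hn⟩
  · obtain ⟨τ, hτ, ht⟩ := perm e he
    exact hn τ hτ ht
  · exact hp'.1 ⟨e, perm e he, hf⟩
  · obtain ⟨τ, hτ, hc⟩ := hO τ' hτ'
    exact hv (Or.inr (Or.inr ⟨τ, hτ, fun e he ht => hn e he (hc e ht)⟩))
end

section
/- Let p = <P,F,O> and p' = <P',F',O'> be consistent ODRL Lite policies. If there exists an obligation rule τ' ∈ O' such that no obligation rule τ ∈ O satisfies τ ⊑ τ', then p is not contained in p'; in particular, the state of the world obtained by choosing, for each τ ∈ O, one event that matches τ but does not match τ', is valid for p but violates p'. -/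
/-- For consistent policies, if some obligation `τ'` of `p'`
contains no obligation of `p`, then `p` is not contained in `p'`; in particular,
any state of the world obtained by choosing, for each `τ ∈ O`, one event matching
`τ` but not `τ'`, is valid for `p` but violates `p'`. -/
theorem stmt2 {Event : Type*} (p p' : ODRLLitePolicy Event)
    (hp : Consistent p) (hp' : Consistent p')
    (τ' : EventRule Event) (hτ' : τ' ∈ p'.O)
    (h : ∀ τ ∈ p.O, ¬ RuleContained τ τ') :
    ¬ PolicyContained p p' ∧
      ∀ f : EventRule Event → Event,
        (∀ τ ∈ p.O, τ (f τ) ∧ ¬ τ' (f τ)) →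
          Valid (f '' p.O) p ∧ Violates (f '' p.O) p' := by
  obtain ⟨hPF, hOF, hOP⟩ := hp
  constructor
  · intro hc
    refine hc {e | (∃ τ ∈ p.O, τ e) ∧ ¬ τ' e} ?_ (Or.inr (Or.inr ⟨τ', hτ', fun e he => he.2⟩))
    rintro (⟨e, he, hn⟩ | ⟨e, he, hF⟩ | ⟨τ, hτ, hn⟩)
    · obtain ⟨σ, hσ, hσe⟩ := hOP e he.1
      exact hn σ hσ hσe
    · exact hOF ⟨e, he.1, hF⟩
    · refine h τ hτ fun e he => ?_
      by_contra hne
      exact hn e ⟨⟨τ, hτ, he⟩, hne⟩ he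
  · intro f hf
    constructor
    · rintro (⟨e, ⟨τ, hτ, rfl⟩, hn⟩ | ⟨e, ⟨τ, hτ, rfl⟩, hF⟩ | ⟨τ, hτ, hn⟩)
      · obtain ⟨σ, hσ, hσe⟩ := hOP _ ⟨τ, hτ, (hf τ hτ).1⟩
        exact hn σ hσ hσe
      · exact hOF ⟨_, ⟨τ, hτ, (hf τ hτ).1⟩, hF⟩
      · exact hn _ ⟨τ, hτ, rfl⟩ (hf τ hτ).1
    · refine Or.inr (Or.inr ⟨τ', hτ', ?_⟩)
      rintro e ⟨τ, hτ, rfl⟩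
      exact (hf τ hτ).2
end

section
/- Making a policy consistent does not change its meaning: given an ODRL Lite policy <P,F,O>, let P* consist of the rules τ* for τ ∈ P whose matching predicate is 'e matches τ and e matches no rule of F', and let O* consist of the rules τ* for τ ∈ O whose matching predicate is 'e matches τ, e matches some rule of P, and e matches no rule of F'. Then for every state of the world ω, ω violates <P,F,O> if and only if ω violates <P*, F, O*>. -/
/-- Making a policy consistent does not change its meaning:
`ω` violates `⟨P,F,O⟩` iff it violates `⟨P*,F,O*⟩`, where `P*` restricts each
permission to events not matching any prohibition, and `O*` restricts each
obligation to events matching a permission and no prohibition. -/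
theorem stmt7 {Event : Type*} (p : ODRLLitePolicy Event) (ω : Set Event) :
    Violates ω p ↔
      Violates ω ⟨(fun τ : EventRule Event =>
                     fun e => τ e ∧ ¬ ∃ σ ∈ p.F, σ e) '' p.P,
                  p.F,
                  (fun τ : EventRule Event =>
                     fun e => τ e ∧ (∃ σ ∈ p.P, σ e) ∧ ¬ ∃ σ ∈ p.F, σ e) '' p.O⟩ := by
  constructor
  · rintro (⟨e, he, h⟩ | h | ⟨τ, hτ, h⟩)
    · refine Or.inl ⟨e, he, ?_⟩
      rintro _ ⟨τ, hτ, rfl⟩ h'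
      exact h τ hτ h'.1
    · exact Or.inr (Or.inl h)
    · refine Or.inr (Or.inr ⟨_, ⟨τ, hτ, rfl⟩, ?_⟩)
      intro e he h'
      exact h e he h'.1
  · rintro (⟨e, he, h⟩ | h | ⟨_, ⟨τ, hτ, rfl⟩, h⟩)
    · by_cases hF : ∃ σ ∈ p.F, σ e
      · exact Or.inr (Or.inl ⟨e, he, hF⟩)
      · exact Or.inl ⟨e, he, fun τ hτ ht => h _ ⟨τ, hτ, rfl⟩ ⟨ht, hF⟩⟩
    · exact Or.inr (Or.inl h)
    · by_cases hF : ∃ e ∈ ω, ∃ σ ∈ p.F, σ e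
      · exact Or.inr (Or.inl hF)
      by_cases hP : ∃ e ∈ ω, ∀ σ ∈ p.P, ¬ σ e
      · exact Or.inl hP
      refine Or.inr (Or.inr ⟨τ, hτ, fun e he ht => h e he ⟨ht, ?_, ?_⟩⟩)
      · by_contra hc
        exact hP ⟨e, he, fun σ hσ hs => hc ⟨σ, hσ, hs⟩⟩
      · exact fun hc => hF ⟨e, he, hc⟩
end
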